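/- The number of friendly 3-watermelons of length n (three non-crossing directed walks from the origin to a common endpoint in which all three walkers coincide on a vertex only at the endpoints and never all share an edge) is, for n ≥ 1, equal to g_n - 2·[n=1], where g_n is the number of irreducible super friendly 3-watermelons of length n; equivalently the counting sequence begins 1, 0, 2, 6, 24, 110, 550 for n = 0,...,6. -/

import Mathlib

/-- A directed walk of length `n`, encoded by its ordinates, frozen after time `n`. -/
def IsWalkTo (n : ℕ) (y : ℕ → ℤ) : Prop :=
  (∀ t < n, y (t + 1) = y t + 1 ∨ y (t + 1) = y t - 1) ∧ (∀ t, n ≤ t → y t = y n)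

/-- A vicious `p`-watermelon of length `n`: walks start at heights `0,2,…,2(p-1)`,
end at heights `c, c+2, …, c+2(p-1)` for some `c`, with strict ordering at every time. -/
def Vicious (p n : ℕ) (y : Fin p → ℕ → ℤ) : Prop :=
  (∀ k, IsWalkTo n (y k)) ∧
  (∀ k : Fin p, y k 0 = 2 * ((k : ℕ) : ℤ)) ∧
  (∃ c : ℤ, ∀ k : Fin p, y k n = c + 2 * ((k : ℕ) : ℤ)) ∧
  (∀ t ≤ n, ∀ j k : Fin p, j < k → y j t < y k t)

/-- A super friendly `p`-watermelon of length `n`: all walks start at the origin,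
all end at the same point, with weak ordering at every time. -/
def SuperFriendly (p n : ℕ) (y : Fin p → ℕ → ℤ) : Prop :=
  (∀ k, IsWalkTo n (y k)) ∧
  (∀ k, y k 0 = 0) ∧
  (∀ j k : Fin p, y j n = y k n) ∧
  (∀ t ≤ n, ∀ j k : Fin p, j ≤ k → y j t ≤ y k t)

/-- All `p` walkers coincide at time `t`. -/
def AllCoincide (p : ℕ) (y : Fin p → ℕ → ℤ) (t : ℕ) : Prop :=
  ∀ j k : Fin p, y j t = y k t

/-- An irreducible super friendly `p`-watermelon: positive length, walkers coincide
only at the two endpoints. -/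
def IrreducibleSFW (p n : ℕ) (y : Fin p → ℕ → ℤ) : Prop :=
  SuperFriendly p n y ∧ 0 < n ∧ ∀ t, 0 < t → t < n → ¬ AllCoincide p y t

/-- A friendly `p`-watermelon: non-crossing walkers from the origin to a common
endpoint, all coinciding on a vertex only at the endpoints, and never all sharing
an edge. -/
def FriendlyWM (p n : ℕ) (y : Fin p → ℕ → ℤ) : Prop :=
  SuperFriendly p n y ∧
  (∀ t, 0 < t → t < n → ¬ AllCoincide p y t) ∧
  (∀ t < n, ¬ (AllCoincide p y t ∧ AllCoincide p y (t + 1)))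

/-!
Families of walks whose heights are constrained at each time can be counted step by step: fixing
the first step leaves a shorter family of the same kind. Irreducible super friendly watermelons
are of this kind; after their first step the walkers have to stay ordered and meet for the first
time at the end. For three walkers the number of such continuations depends only on the two gaps
between neighbours, which perform a nearest-neighbour walk on a triangular lattice, confined to a
Weyl chamber of type `A₂` and stopped at its apex; this gives a recursion in two integers that is
short enough to be evaluated. An irreducible watermelon of length `n ≥ 2` cannot have an edge shared
by all walkers, so friendliness only excludes the two configurations of length `1`.
-/

section ConfinedWalks

variable {ι : Type*} {n : ℕ} {C : ℕ → (ι → ℤ) → Prop} {x : ι → ℤ}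

/-- The families of walks of length `n` from the heights `x` whose heights at time `t ≤ n` satisfy
`C t`; the ordering and meeting conditions on watermelons are all of this form. -/
def confinedWalks (n : ℕ) (C : ℕ → (ι → ℤ) → Prop) (x : ι → ℤ) : Set (ι → ℕ → ℤ) :=
  {y | (∀ k, IsWalkTo n (y k)) ∧ (∀ k, y k 0 = x k) ∧ ∀ t ≤ n, C t fun k ↦ y k t}

/-- The family of walks that starts at the heights `x` and continues as `z` from time `1` on. -/
def prependHeights (x : ι → ℤ) (z : ι → ℕ → ℤ) : ι → ℕ → ℤ
  | k, 0 => x k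
  | k, t + 1 => z k t

theorem prependHeights_injective (x : ι → ℤ) : Function.Injective (prependHeights x) :=
  fun _ _ h ↦ funext fun k ↦ funext fun t ↦ congrFun (congrFun h k) (t + 1)

theorem prependHeights_tail {y : ι → ℕ → ℤ} (h : ∀ k, y k 0 = x k) :
    prependHeights x (fun k t ↦ y k (t + 1)) = y := by
  funext k t
  cases t with
  | zero => exact (h k).symm
  | succ t => rfl

theorem eq_add_one_or_eq_sub_one_iff_exists_units {a b : ℤ} :
    b = a + 1 ∨ b = a - 1 ↔ ∃ u : ℤˣ, b = a + u := by
  constructor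
  · rintro (h | h)
    exacts [⟨1, h⟩, ⟨-1, h⟩]
  · rintro ⟨u, h⟩
    obtain rfl | rfl := Int.units_eq_one_or u
    exacts [Or.inl h, Or.inr h]

theorem isWalkTo_zero {y : ℕ → ℤ} : IsWalkTo 0 y ↔ ∀ t, y t = y 0 := by
  simp [IsWalkTo]

theorem isWalkTo_succ {y : ℕ → ℤ} :
    IsWalkTo (n + 1) y ↔ (∃ u : ℤˣ, y 1 = y 0 + u) ∧ IsWalkTo n fun t ↦ y (t + 1) := by
  rw [← eq_add_one_or_eq_sub_one_iff_exists_units]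
  constructor
  · rintro ⟨hstep, hfrozen⟩
    exact ⟨hstep 0 n.succ_pos, fun t ht ↦ hstep (t + 1) (by omega),
      fun t ht ↦ hfrozen (t + 1) (by omega)⟩
  · rintro ⟨h0, hstep, hfrozen⟩
    refine ⟨fun t ht ↦ ?_, fun t ht ↦ ?_⟩
    · cases t with
      | zero => exact h0
      | succ t => exact hstep t (by omega)
    · obtain ⟨t, rfl⟩ := Nat.exists_eq_add_of_le' (show 1 ≤ t by omega)
      exact hfrozen t (by omega)

theorem confinedWalks_eq_empty (hx : ¬ C 0 x) : confinedWalks n C x = ∅ := by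
  refine Set.eq_empty_of_forall_notMem fun y ⟨_, hstart, hC⟩ ↦ hx ?_
  simpa only [hstart] using hC 0 n.zero_le

theorem confinedWalks_zero (hx : C 0 x) : confinedWalks 0 C x = {fun k _ ↦ x k} := by
  ext y
  constructor
  · rintro ⟨hwalk, hstart, -⟩
    funext k t
    rw [isWalkTo_zero.1 (hwalk k), hstart]
  · rintro rfl
    refine ⟨fun k ↦ isWalkTo_zero.2 fun _ ↦ rfl, fun _ ↦ rfl, fun t ht ↦ ?_⟩
    rwa [Nat.le_zero.1 ht]

theorem confinedWalks_succ (hx : C 0 x) :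
    confinedWalks (n + 1) C x = ⋃ s : ι → ℤˣ,
      prependHeights x '' confinedWalks n (fun t ↦ C (t + 1)) (fun k ↦ x k + s k) := by
  ext y
  simp only [Set.mem_iUnion, Set.mem_image]
  constructor
  · rintro ⟨hwalk, hstart, hC⟩
    simp only [isWalkTo_succ, hstart] at hwalk
    choose s hs using fun k ↦ (hwalk k).1
    exact ⟨s, _, ⟨fun k ↦ (hwalk k).2, hs, fun t ht ↦ hC (t + 1) (by omega)⟩,
      prependHeights_tail hstart⟩
  · rintro ⟨s, z, ⟨hwalk, hstart, hC⟩, rfl⟩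
    refine ⟨fun k ↦ isWalkTo_succ.2 ⟨⟨s k, hstart k⟩, hwalk k⟩, fun _ ↦ rfl, fun t ht ↦ ?_⟩
    cases t with
    | zero => exact hx
    | succ t => exact hC t (by omega)

theorem finite_confinedWalks [Finite ι] (n : ℕ) (C : ℕ → (ι → ℤ) → Prop) (x : ι → ℤ) :
    (confinedWalks n C x).Finite := by
  induction n generalizing C x with
  | zero =>
    by_cases hx : C 0 x
    · simp only [confinedWalks_zero hx, Set.finite_singleton]
    · simp only [confinedWalks_eq_empty hx, Set.finite_empty]
  | succ n ih =>
    by_cases hx : C 0 x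
    · rw [confinedWalks_succ hx]
      exact Set.finite_iUnion fun s ↦ (ih _ _).image _
    · simp only [confinedWalks_eq_empty hx, Set.finite_empty]

theorem pairwise_disjoint_image_prependHeights (n : ℕ) (C : ℕ → (ι → ℤ) → Prop) (x : ι → ℤ) :
    Pairwise (Function.onFun Disjoint fun s : ι → ℤˣ ↦
      prependHeights x '' confinedWalks n C (fun k ↦ x k + s k)) := by
  intro s s' hs
  refine Set.disjoint_image_image ?_
  rintro z ⟨-, hz, -⟩ z' ⟨-, hz', -⟩ h
  obtain rfl := prependHeights_injective x h
  refine hs (funext fun k ↦ Units.ext ?_)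
  exact add_left_cancel ((hz k).symm.trans (hz' k))

theorem ncard_confinedWalks_succ [Fintype ι] [DecidableEq ι] (hx : C 0 x) :
    (confinedWalks (n + 1) C x).ncard =
      ∑ s : ι → ℤˣ, (confinedWalks n (fun t ↦ C (t + 1)) fun k ↦ x k + s k).ncard := by
  rw [confinedWalks_succ hx, Set.ncard_iUnion_of_finite
    (fun s ↦ (finite_confinedWalks _ _ _).image _) (pairwise_disjoint_image_prependHeights _ _ _),
    finsum_eq_sum_of_fintype]
  simp only [Set.ncard_image_of_injective _ (prependHeights_injective x)]

end ConfinedWalks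

section FirstMeetings

variable {ι : Type*} [Preorder ι] {n : ℕ} {x : ι → ℤ}

/-- The weakly ordered families of walks from the heights `x` whose first common vertex, the start
included, is reached at time `n`. -/
def firstMeetings (n : ℕ) (x : ι → ℤ) : Set (ι → ℕ → ℤ) :=
  confinedWalks n (fun t h ↦ Monotone h ∧ ((∀ j k, h j = h k) ↔ t = n)) x

theorem ncard_firstMeetings_zero (x : ι → ℤ) [Decidable (∀ j k, x j = x k)] :
    (firstMeetings 0 x).ncard = if ∀ j k, x j = x k then 1 else 0 := by
  split_ifs with hx
  · rw [firstMeetings, confinedWalks_zero ⟨fun j k _ ↦ (hx j k).le, by simpa using hx⟩,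
      Set.ncard_singleton]
  · rw [firstMeetings, confinedWalks_eq_empty (by simp [hx]), Set.ncard_empty]

theorem firstMeetings_succ_eq_empty (hx : ¬ (Monotone x ∧ ¬ ∀ j k, x j = x k)) :
    firstMeetings (n + 1) x = ∅ :=
  confinedWalks_eq_empty (by simpa using hx)

theorem ncard_firstMeetings_succ [Fintype ι] [DecidableEq ι] (hmono : Monotone x)
    (hx : ¬ ∀ j k, x j = x k) :
    (firstMeetings (n + 1) x).ncard =
      ∑ s : ι → ℤˣ, (firstMeetings n fun k ↦ x k + s k).ncard := by
  rw [firstMeetings, ncard_confinedWalks_succ ⟨hmono, by simpa using hx⟩]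
  simp only [Nat.add_right_cancel_iff, firstMeetings]

end FirstMeetings

section Watermelons

variable {p n : ℕ} {y : Fin p → ℕ → ℤ}

theorem irreducibleSFW_iff_mem_confinedWalks (hn : 0 < n) :
    IrreducibleSFW p n y ↔ y ∈ confinedWalks n
      (fun t h ↦ Monotone h ∧ ((∀ j k, h j = h k) ↔ t = 0 ∨ t = n)) 0 := by
  constructor
  · rintro ⟨⟨hwalk, hstart, hend, hmono⟩, -, hmeet⟩
    refine ⟨hwalk, hstart, fun t ht ↦ ⟨hmono t ht, fun h ↦ ?_, ?_⟩⟩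
    · by_contra! ht'
      exact hmeet t (by omega) (by omega) h
    · rintro (rfl | rfl)
      exacts [fun j k ↦ (hstart j).trans (hstart k).symm, hend]
  · rintro ⟨hwalk, hstart, hC⟩
    refine ⟨⟨hwalk, hstart, (hC n le_rfl).2.2 (Or.inr rfl), fun t ht ↦ (hC t ht).1⟩, hn, ?_⟩
    intro t ht0 htn h
    have hend := (hC t htn.le).2.1 h
    omega

theorem natCard_irreducibleSFW_succ (p n : ℕ) :
    Nat.card {y : Fin p → ℕ → ℤ // IrreducibleSFW p (n + 1) y} =
      ∑ s : Fin p → ℤˣ, (firstMeetings n fun k ↦ (s k : ℤ)).ncard := by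
  simp only [irreducibleSFW_iff_mem_confinedWalks n.succ_pos]
  refine (Nat.card_coe_set_eq _).trans
    ((ncard_confinedWalks_succ ⟨monotone_const, by simp⟩).trans ?_)
  simp [firstMeetings]

theorem natCard_irreducibleSFW_one (p : ℕ) [NeZero p] :
    Nat.card {y : Fin p → ℕ → ℤ // IrreducibleSFW p 1 y} = 2 := by
  have hconst : (Finset.univ.filter fun s : Fin p → ℤˣ ↦ ∀ j k, (s j : ℤ) = s k) =
      Finset.univ.image (Function.const (Fin p)) := by
    ext s
    simp only [Finset.mem_filter_univ, Finset.mem_image, Finset.mem_univ, true_and, Units.val_inj]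
    exact ⟨fun h ↦ ⟨s 0, funext (h 0)⟩, by rintro ⟨u, rfl⟩ _ _; rfl⟩
  simp only [natCard_irreducibleSFW_succ, ncard_firstMeetings_zero]
  rw [← Finset.card_filter, hconst, Finset.card_image_of_injective _ Function.const_injective]
  rfl

theorem friendlyWM_iff_irreducibleSFW (hn : 2 ≤ n) : FriendlyWM p n y ↔ IrreducibleSFW p n y := by
  constructor
  · rintro ⟨hfriendly, hmeet, -⟩
    exact ⟨hfriendly, by omega, hmeet⟩
  · rintro ⟨hfriendly, -, hmeet⟩
    refine ⟨hfriendly, hmeet, fun t ht ⟨hnow, hnext⟩ ↦ ?_⟩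
    rcases t.eq_zero_or_pos with rfl | htpos
    · exact hmeet 1 one_pos hn hnext
    · exact hmeet t htpos ht hnow

theorem not_friendlyWM_one : ¬ FriendlyWM p 1 y := by
  rintro ⟨⟨-, hstart, hend, -⟩, -, hedge⟩
  exact hedge 0 one_pos ⟨fun j k ↦ (hstart j).trans (hstart k).symm, hend⟩

theorem friendlyWM_zero_iff : FriendlyWM p 0 y ↔ y = 0 := by
  constructor
  · rintro ⟨⟨hwalk, hstart, -, -⟩, -, -⟩
    funext k t
    exact (isWalkTo_zero.1 (hwalk k) t).trans (hstart k)
  · rintro rfl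
    simp [FriendlyWM, SuperFriendly, IsWalkTo]

theorem natCard_friendlyWM_zero (p : ℕ) :
    Nat.card {y : Fin p → ℕ → ℤ // FriendlyWM p 0 y} = 1 := by
  simp [friendlyWM_zero_iff]

theorem natCard_friendlyWM_one (p : ℕ) :
    Nat.card {y : Fin p → ℕ → ℤ // FriendlyWM p 1 y} = 0 := by
  simp [not_friendlyWM_one]

theorem natCard_friendlyWM_of_two_le (p : ℕ) (hn : 2 ≤ n) :
    Nat.card {y : Fin p → ℕ → ℤ // FriendlyWM p n y} =
      Nat.card {y : Fin p → ℕ → ℤ // IrreducibleSFW p n y} := by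
  simp only [friendlyWM_iff_irreducibleSFW hn]

theorem natCard_friendlyWM_eq_sub (p : ℕ) [NeZero p] (hn : 1 ≤ n) :
    (Nat.card {y : Fin p → ℕ → ℤ // FriendlyWM p n y} : ℤ) =
      (Nat.card {y : Fin p → ℕ → ℤ // IrreducibleSFW p n y} : ℤ) - (if n = 1 then 2 else 0) := by
  rcases hn.eq_or_lt with rfl | hn
  · simp [natCard_friendlyWM_one, natCard_irreducibleSFW_one]
  · rw [natCard_friendlyWM_of_two_le p hn, if_neg hn.ne', sub_zero]

end Watermelons

section ThreeWalkers

theorem sum_pi_fin_succ {α M : Type*} [Fintype α] [AddCommMonoid M] (n : ℕ)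
    (f : (Fin (n + 1) → α) → M) :
    ∑ s, f s = ∑ a, ∑ s : Fin n → α, f (Fin.cons a s) := by
  rw [← (Fin.consEquiv fun _ ↦ α).sum_comp, Fintype.sum_prod_type]
  rfl

theorem sum_pi_fin_three {α M : Type*} [Fintype α] [AddCommMonoid M] (f : (Fin 3 → α) → M) :
    ∑ s, f s = ∑ a, ∑ b, ∑ c, f ![a, b, c] := by
  simp only [sum_pi_fin_succ, Fintype.sum_unique]
  rfl

theorem sum_units_int {M : Type*} [AddCommMonoid M] (f : ℤˣ → M) : ∑ u, f u = f 1 + f (-1) :=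
  Finset.sum_pair (by decide)

/-- The sum of `f` over the changes that the pair of gaps `(a, b)` between three walkers undergoes
in one of the eight simultaneous steps: the six roots of type `A₂`, scaled by `2`, and twice `0`. -/
def gapStepSum (f : ℤ → ℤ → ℕ) (a b : ℤ) : ℕ :=
  2 * f a b + f (a + 2) b + f (a - 2) b + f a (b + 2) + f a (b - 2) +
    f (a + 2) (b - 2) + f (a - 2) (b + 2)

/-- The number of ways in which three ordered walkers with gaps `a` and `b` first meet after exactly
`n` steps. -/
def gapFirstMeetingCount : ℕ → ℤ → ℤ → ℕ
  | 0, a, b => if a = 0 ∧ b = 0 then 1 else 0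
  | n + 1, a, b =>
    if (0 ≤ a ∧ 0 ≤ b) ∧ ¬ (a = 0 ∧ b = 0) then gapStepSum (gapFirstMeetingCount n) a b else 0

theorem forall_eq_iff_gaps {x : Fin 3 → ℤ} :
    (∀ j k, x j = x k) ↔ x 1 - x 0 = 0 ∧ x 2 - x 1 = 0 := by
  simp only [Fin.forall_fin_succ, Fin.isValue, Fin.succ_zero_eq_one, Fin.succ_one_eq_two,
    IsEmpty.forall_iff, and_true, true_and]
  omega

theorem monotone_iff_gaps {x : Fin 3 → ℤ} : Monotone x ↔ 0 ≤ x 1 - x 0 ∧ 0 ≤ x 2 - x 1 := by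
  simp [Fin.monotone_iff_le_succ, Fin.forall_fin_succ]

theorem sum_steps_eq_gapStepSum (f : ℤ → ℤ → ℕ) (a b : ℤ) :
    ∑ s : Fin 3 → ℤˣ, f (a + (s 1 - s 0)) (b + (s 2 - s 1)) = gapStepSum f a b := by
  calc
    _ = ∑ u : ℤˣ, ∑ v : ℤˣ, ∑ w : ℤˣ, f (a + (v - u)) (b + (w - v)) := sum_pi_fin_three _
    _ = gapStepSum f a b := by
      simp only [sum_units_int, Units.val_one, Units.val_neg, gapStepSum]
      ring_nf

theorem ncard_firstMeetings (n : ℕ) (x : Fin 3 → ℤ) :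
    (firstMeetings n x).ncard = gapFirstMeetingCount n (x 1 - x 0) (x 2 - x 1) := by
  induction n generalizing x with
  | zero => simp only [ncard_firstMeetings_zero, gapFirstMeetingCount, forall_eq_iff_gaps]
  | succ n ih =>
    simp only [gapFirstMeetingCount, ← monotone_iff_gaps, ← forall_eq_iff_gaps]
    split_ifs with hx
    · simp only [ncard_firstMeetings_succ hx.1 hx.2, ih, add_sub_add_comm,
        sum_steps_eq_gapStepSum]
    · rw [firstMeetings_succ_eq_empty hx, Set.ncard_empty]

theorem natCard_irreducibleSFW_three_succ (n : ℕ) :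
    Nat.card {y : Fin 3 → ℕ → ℤ // IrreducibleSFW 3 (n + 1) y} =
      gapStepSum (gapFirstMeetingCount n) 0 0 := by
  simp only [natCard_irreducibleSFW_succ, ncard_firstMeetings]
  simpa using sum_steps_eq_gapStepSum (gapFirstMeetingCount n) 0 0

theorem natCard_friendlyWM_three_add_two (n : ℕ) :
    Nat.card {y : Fin 3 → ℕ → ℤ // FriendlyWM 3 (n + 2) y} =
      gapStepSum (gapFirstMeetingCount (n + 1)) 0 0 := by
  rw [natCard_friendlyWM_of_two_le 3 (by omega), natCard_irreducibleSFW_three_succ]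

end ThreeWalkers

/-- For `n ≥ 1` the number of friendly 3-watermelons of length `n` equals
`g_n - 2·[n = 1]` where `g_n` counts irreducible super friendly 3-watermelons;
the counting sequence begins `1, 0, 2, 6, 24, 110, 550`. -/
theorem friendly3_counts :
    (∀ n : ℕ, 1 ≤ n →
      (Nat.card {y : Fin 3 → ℕ → ℤ // FriendlyWM 3 n y} : ℤ) =
        (Nat.card {y : Fin 3 → ℕ → ℤ // IrreducibleSFW 3 n y} : ℤ) -
          (if n = 1 then 2 else 0)) ∧
    Nat.card {y : Fin 3 → ℕ → ℤ // FriendlyWM 3 0 y} = 1 ∧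
    Nat.card {y : Fin 3 → ℕ → ℤ // FriendlyWM 3 1 y} = 0 ∧
    Nat.card {y : Fin 3 → ℕ → ℤ // FriendlyWM 3 2 y} = 2 ∧
    Nat.card {y : Fin 3 → ℕ → ℤ // FriendlyWM 3 3 y} = 6 ∧
    Nat.card {y : Fin 3 → ℕ → ℤ // FriendlyWM 3 4 y} = 24 ∧
    Nat.card {y : Fin 3 → ℕ → ℤ // FriendlyWM 3 5 y} = 110 ∧
    Nat.card {y : Fin 3 → ℕ → ℤ // FriendlyWM 3 6 y} = 550 := by
  refine ⟨fun n hn ↦ natCard_friendlyWM_eq_sub 3 hn, natCard_friendlyWM_zero 3,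
    natCard_friendlyWM_one 3, ?_, ?_, ?_, ?_, ?_⟩
  all_goals
    rw [natCard_friendlyWM_three_add_two]
    decide +kernel
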